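/- Let n be a natural number and let q, a, b, c, d be nonzero complex numbers with a ≠ 1, such that all the q-shifted factorials appearing in the denominators below are nonzero for 0 ≤ k ≤ n. Then ∑_{k=0}^{n} ((1−a q^{2k})/(1−a)) · ((a;q)_k (b;q)_k (c;q)_k (d;q)_k (a²q^{n+1}/(bcd);q)_k (q^{−n};q)_k) / ((aq/b;q)_k (aq/c;q)_k (aq/d;q)_k (bcd q^{−n}/a;q)_k (a q^{n+1};q)_k (q;q)_k) · q^k = ((aq;q)_n (aq/(bc);q)_n (aq/(bd);q)_n (aq/(cd);q)_n) / ((aq/b;q)_n (aq/c;q)_n (aq/d;q)_n (aq/(bcd);q)_n). -/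

import Mathlib

/-- The q-shifted factorial `(a;q)_m = (1−a)(1−aq)⋯(1−a q^{m−1})`, with `(a;q)_0 = 1`. -/
def qShiftedFactorial (a q : ℂ) (m : ℕ) : ℂ := ∏ i ∈ Finset.range m, (1 - a * q ^ i)

set_option maxHeartbeats 4000000 in
theorem qd_key (b c d x w y a e : ℂ) (hb : b ≠ 0) (hc : c ≠ 0) (hd : d ≠ 0) (hx : x ≠ 0)
    (hw : w ≠ 0) (ha : a = x / w) (he : e = x^2/(b*c*d*w)) :
    (1-x/b)*(1-x/c)*(1-x/d)*(-(x/(b*c*d)))*(1-a*y^2)*y*(1-e*y)*(1-1/w)*(1-b*c*d*y/x)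
    - (1-x/(b*c))*(1-x/(b*d))*(1-x/(c*d))*(1-a*y^2)*y*(1-e)*(1-y/w)*(1-x*y)
    = -(x*(1-x^2/(b*c*d))/(b*c*d)) * ((1-a*y)*(1-b*y)*(1-c*y)*(1-d*y)*(1-e*y)*(1-y/w)
     - (1-y)*(1-a*y/b)*(1-a*y/c)*(1-a*y/d)*(1-b*c*d*y/x)*(1-x*y)) := by
  subst ha he
  field_simp
  ring

theorem qd_base (b c d x : ℂ) (hb : b ≠ 0) (hc : c ≠ 0) (hd : d ≠ 0) :
    (1-x/b)*(1-x/c)*(1-x/d)*(1-x/(b*c*d)) - (1-x)*((1-x/(b*c))*(1-x/(b*d))*(1-x/(c*d)))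
    = -(x*(1-x^2/(b*c*d))/(b*c*d)) * ((1-b)*(1-c)*(1-d)) := by
  field_simp
  ring

/-- The algebraic step, with all building blocks opaque. -/
theorem qd_alg (al t be Y y s1 s2 s3 s4 s5 s6 K n1 n2 n3 n4 d1 d2 d3 d4 g ox oa : ℂ)
    (A B C D E U fb fc fd r X H : ℂ)
    (hfb : fb ≠ 0) (hfc : fc ≠ 0) (hfd : fd ≠ 0) (hr : r ≠ 0) (hX : X ≠ 0) (hH : H ≠ 0)
    (h1 : d1 ≠ 0) (h2 : d2 ≠ 0) (h3 : d3 ≠ 0) (h4 : d4 ≠ 0) (hs3 : s3 ≠ 0) (hs6 : s6 ≠ 0)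
    (hg : g ≠ 0) (hox : ox ≠ 0) (hoa : oa ≠ 0)
    (key : al*t*Y*y*s1*s2*s3 - be*Y*y*s4*s5*s6 = K*(n1*n2*n3*n4*s1*s5 - d1*d2*d3*d4*s3*s6)) :
    K * (A*B*C*D*E*U/(fb*fc*fd*r*X*H)) +
     (al*(t*g) * (Y/oa * (((oa*A)*B*C*D*(E*s1)*(s2*U))/
        ((fb*d2)*(fc*d3)*(fd*d4)*(g*X)*(H*s6)*(r*d1))) * y)
      - ox*be * (Y/oa * (((oa*A)*B*C*D*(s4*E)*(U*s5))/
        ((fb*d2)*(fc*d3)*(fd*d4)*(X*s3)*(ox*H)*(r*d1))) * y))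
    = K * ((A*n1)*(B*n2)*(C*n3)*(D*n4)*(E*s1)*(U*s5)/
        ((fb*d2)*(fc*d3)*(fd*d4)*(r*d1)*(X*s3)*(H*s6))) := by
  have : ∀ p q r : ℂ, p + q - r = 0 → p + q = r := fun p q r h => by linear_combination h
  apply this
  trans (A*B*C*D*E*U/(fb*fc*fd*r*X*H*d1*d2*d3*d4*s3*s6)) *
    ((al*t*Y*y*s1*s2*s3 - be*Y*y*s4*s5*s6) - K*(n1*n2*n3*n4*s1*s5 - d1*d2*d3*d4*s3*s6))
  · field_simp
    ring
  · rw [key]; ring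

theorem qsf_succ (z q : ℂ) (m : ℕ) :
    qShiftedFactorial z q (m+1) = qShiftedFactorial z q m * (1 - z * q^m) := by
  simp [qShiftedFactorial, Finset.prod_range_succ]

theorem qsf_succ' (z q : ℂ) (m : ℕ) :
    qShiftedFactorial z q (m+1) = (1 - z) * qShiftedFactorial (z*q) q m := by
  rw [qShiftedFactorial, Finset.prod_range_succ']
  simp only [qShiftedFactorial, pow_zero, mul_one, pow_succ']
  rw [mul_comm]
  simp only [mul_assoc]

theorem qsf_zero (z q : ℂ) : qShiftedFactorial z q 0 = 1 := by
  simp [qShiftedFactorial]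

theorem qsf_ne (z q : ℂ) (m : ℕ) (h : ∀ i < m, z * q^i ≠ 1) : qShiftedFactorial z q m ≠ 0 := by
  rw [qShiftedFactorial, Finset.prod_ne_zero_iff]
  intro i hi
  exact sub_ne_zero.2 (h i (Finset.mem_range.1 hi)).symm

/-- The general summand. -/
noncomputable def qdT (q a b c d e u X y : ℂ) (k : ℕ) : ℂ :=
  ((1 - a * q ^ (2 * k)) / (1 - a)) *
        ((qShiftedFactorial a q k * qShiftedFactorial b q k * qShiftedFactorial c q k *
            qShiftedFactorial d q k * qShiftedFactorial e q k * qShiftedFactorial u q k) /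
          (qShiftedFactorial (a * q / b) q k * qShiftedFactorial (a * q / c) q k *
            qShiftedFactorial (a * q / d) q k *
            qShiftedFactorial X q k *
            qShiftedFactorial y q k * qShiftedFactorial q q k)) * q ^ k

theorem qd_tele (q a b c d e x w : ℂ) (hq : q ≠ 0) (hb : b ≠ 0) (hc : c ≠ 0) (hd : d ≠ 0)
    (hx : x ≠ 0) (hw : w ≠ 0) (ha : a = x / w) (he : e = x^2/(b*c*d*w)) (ha1 : a ≠ 1)
    (hx1 : x ≠ 1) (hg : 1 - b*c*d/x ≠ 0) (m : ℕ)
    (h1 : ∀ i < m, (a*q/b) * q^i ≠ 1) (h2 : ∀ i < m, (a*q/c) * q^i ≠ 1)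
    (h3 : ∀ i < m, (a*q/d) * q^i ≠ 1) (h4 : ∀ i < m, (b*c*d/x*q) * q^i ≠ 1)
    (h5 : ∀ i < m, (x*q) * q^i ≠ 1) (h6 : ∀ i < m, q * q^i ≠ 1) :
    ∑ k ∈ Finset.range (m+1),
      ((1-x/b)*(1-x/c)*(1-x/d)*(1-x/(b*c*d)) * qdT q a b c d (e*q) (1/w) (b*c*d/x) (x*q) k
       - (1-x)*((1-x/(b*c))*(1-x/(b*d))*(1-x/(c*d))) *
          qdT q a b c d e (1/w*q) (b*c*d/x*q) x k)
    = -(x*(1-x^2/(b*c*d))/(b*c*d)) * (qShiftedFactorial (a*q) q m *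
        qShiftedFactorial b q (m+1) * qShiftedFactorial c q (m+1) * qShiftedFactorial d q (m+1) *
        qShiftedFactorial (e*q) q m * qShiftedFactorial (1/w*q) q m /
        (qShiftedFactorial (a*q/b) q m * qShiftedFactorial (a*q/c) q m *
         qShiftedFactorial (a*q/d) q m * qShiftedFactorial q q m *
         qShiftedFactorial (b*c*d/x*q) q m * qShiftedFactorial (x*q) q m)) := by
  have hoa : 1 - a ≠ 0 := sub_ne_zero.2 ha1.symm
  induction m with
  | zero =>
    have := qd_base b c d x hb hc hd
    simp [qdT, qsf_zero, qsf_succ, hoa] at this ⊢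
    exact this
  | succ m ih =>
    rw [Finset.sum_range_succ, ih (fun i hi => h1 i (by lia)) (fun i hi => h2 i (by lia))
      (fun i hi => h3 i (by lia)) (fun i hi => h4 i (by lia))
      (fun i hi => h5 i (by lia)) (fun i hi => h6 i (by lia))]
    have key := qd_key b c d x w (q^(m+1)) a e hb hc hd hx hw ha he
    have e1 : (1 - x/(b*c*d)) = (-(x/(b*c*d))) * (1 - b*c*d/x) := by
      field_simp
      ring
    have z : ∀ f : ℂ, ∀ m, (∀ i < m+1, f * q^i ≠ 1) → qShiftedFactorial f q m ≠ 0 :=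
      fun f m h => qsf_ne f q m (fun i hi => h i (by lia))
    have zz : ∀ f g : ℂ, (∀ i < m+1, f * q^i ≠ 1) → f * q^m = g → 1 - g ≠ 0 :=
      fun f g h hh => sub_ne_zero.2 (hh ▸ h m (by lia)).symm
    have := qd_alg _ _ _ _ _ _ _ _ _ _ _ _ _ _ _ _ _ _ _ _ (1 - b*c*d/x) (1-x) (1-a)
      (qShiftedFactorial (a*q) q m) (qShiftedFactorial b q (m+1)) (qShiftedFactorial c q (m+1))
      (qShiftedFactorial d q (m+1)) (qShiftedFactorial (e*q) q m) (qShiftedFactorial (1/w*q) q m)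
      _ _ _ _ _ _
      (z _ _ h1) (z _ _ h2) (z _ _ h3) (z _ _ h6) (z _ _ h4) (z _ _ h5)
      (zz _ _ h6 (by ring)) (zz _ _ h1 (by ring)) (zz _ _ h2 (by ring)) (zz _ _ h3 (by ring))
      (zz _ _ h4 (by ring)) (zz _ _ h5 (by ring)) hg (sub_ne_zero.2 hx1.symm) hoa key
    have p1 : a * (q^(m+1))^2 = a * q^(2*(m+1)) := by ring
    rw [p1, ← e1] at this
    have q0 : qShiftedFactorial a q (m+1) = (1-a) * qShiftedFactorial (a*q) q m := qsf_succ' _ _ _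
    have q1 : qShiftedFactorial (a*q) q (m+1) = qShiftedFactorial (a*q) q m * (1 - a*q^(m+1)) := by
      rw [qsf_succ]; ring
    have q2 : ∀ z, qShiftedFactorial z q (m+1+1) = qShiftedFactorial z q (m+1) * (1 - z*q^(m+1)) :=
      fun z => qsf_succ _ _ _
    have q3 : qShiftedFactorial (e*q) q (m+1) = qShiftedFactorial (e*q) q m * (1 - e*q^(m+1)) := by
      rw [qsf_succ]; ring
    have q4 : qShiftedFactorial e q (m+1) = (1-e) * qShiftedFactorial (e*q) q m := qsf_succ' _ _ _
    have q5 : qShiftedFactorial (1/w) q (m+1) = (1-1/w) * qShiftedFactorial (1/w*q) q m :=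
      qsf_succ' _ _ _
    have q6 : qShiftedFactorial (1/w*q) q (m+1) =
        qShiftedFactorial (1/w*q) q m * (1 - q^(m+1)/w) := by
      rw [qsf_succ]; ring
    have q7 : ∀ z, qShiftedFactorial (a*q/z) q (m+1) =
        qShiftedFactorial (a*q/z) q m * (1 - a*q^(m+1)/z) := by
      intro z; rw [qsf_succ]; ring
    have q8 : qShiftedFactorial (b*c*d/x) q (m+1) =
        (1-b*c*d/x) * qShiftedFactorial (b*c*d/x*q) q m := qsf_succ' _ _ _
    have q9 : qShiftedFactorial (b*c*d/x*q) q (m+1) =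
        qShiftedFactorial (b*c*d/x*q) q m * (1 - b*c*d*q^(m+1)/x) := by
      rw [qsf_succ]; ring
    have q10 : qShiftedFactorial x q (m+1) = (1-x) * qShiftedFactorial (x*q) q m := qsf_succ' _ _ _
    have q11 : qShiftedFactorial (x*q) q (m+1) =
        qShiftedFactorial (x*q) q m * (1 - x*q^(m+1)) := by
      rw [qsf_succ]; ring
    have q12 : qShiftedFactorial q q (m+1) = qShiftedFactorial q q m * (1 - q^(m+1)) := by
      rw [qsf_succ]; ring
    unfold qdT
    rw [q2 b, q2 c, q2 d, q0, q1, q3, q4, q5, q6, q7, q7, q7, q8, q9, q10, q11, q12]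
    exact this

/-- Identity for generic `a`. -/
theorem qd_generic (q a b c d : ℂ) (hq : q ≠ 0) (ha : a ≠ 0) (hb : b ≠ 0) (hc : c ≠ 0)
    (hd : d ≠ 0) (n : ℕ)
    (g0 : ∀ j ≤ 2*n, a*q^j ≠ 1) (g1 : ∀ j ≤ n, a*q^j ≠ b) (g2 : ∀ j ≤ n, a*q^j ≠ c)
    (g3 : ∀ j ≤ n, a*q^j ≠ d) (g4 : ∀ j ≤ n, a*q^j ≠ b*c*d) (g5 : ∀ j < n, q*q^j ≠ 1) :
    ∑ k ∈ Finset.range (n+1), qdT q a b c d (a^2*q^(n+1)/(b*c*d)) (q^(-(n:ℤ)))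
        (b*c*d*q^(-(n:ℤ))/a) (a*q^(n+1)) k
      = (qShiftedFactorial (a * q) q n * qShiftedFactorial (a * q / (b * c)) q n *
            qShiftedFactorial (a * q / (b * d)) q n *
            qShiftedFactorial (a * q / (c * d)) q n) /
          (qShiftedFactorial (a * q / b) q n * qShiftedFactorial (a * q / c) q n *
            qShiftedFactorial (a * q / d) q n *
            qShiftedFactorial (a * q / (b * c * d)) q n) := by
  have ha1 : a ≠ 1 := by simpa using g0 0 (by lia)
  induction n with
  | zero =>
    have : 1 - a ≠ 0 := sub_ne_zero.2 ha1.symm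
    simp [qdT, qsf_zero, this]
  | succ n ih =>
    have ih' := ih (fun j hj => g0 j (by lia)) (fun j hj => g1 j (by lia))
      (fun j hj => g2 j (by lia)) (fun j hj => g3 j (by lia)) (fun j hj => g4 j (by lia))
      (fun j hj => g5 j (by lia))
    have hw : q^(n+1) ≠ 0 := pow_ne_zero _ hq
    have hx : a*q^(n+1) ≠ 0 := mul_ne_zero ha hw
    have gen : ∀ z : ℂ, z ≠ 0 → (∀ j ≤ n+1, a*q^j ≠ z) → ∀ i < n+1, (a*q/z)*q^i ≠ 1 := by
      intro z hz h i hi h'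
      apply h (i+1) (by lia)
      field_simp at h'
      rw [← h']; ring
    have one : ∀ z : ℂ, z ≠ 0 → (∀ j ≤ n+1, a*q^j ≠ z) → 1 - a*q^(n+1)/z ≠ 0 := by
      intro z hz h h'
      apply h (n+1) le_rfl
      field_simp at h'
      linear_combination -h'
    have hbcd : b*c*d ≠ 0 := mul_ne_zero (mul_ne_zero hb hc) hd
    have tele := qd_tele q a b c d (a^2*q^(n+1)/(b*c*d)) (a*q^(n+1)) (q^(n+1)) hq hb hc hd hx hw
      (by field_simp) (by field_simp) ha1 (g0 _ (by lia))
      (by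
        intro h
        apply g4 (n+1) le_rfl
        field_simp at h
        linear_combination h) (n+1) (gen b hb g1) (gen c hc g2) (gen d hd g3)
      (by
        intro i hi h
        apply g4 (n-i) (by lia)
        obtain ⟨t, rfl⟩ : ∃ t, n = i + t := ⟨n - i, by lia⟩
        simp only [Nat.add_sub_cancel_left]
        have : q^i ≠ 0 := pow_ne_zero _ hq
        rw [div_mul_eq_mul_div, div_mul_eq_mul_div, div_eq_one_iff_eq hx] at h
        apply mul_right_cancel₀ (mul_ne_zero hq this)
        rw [← mul_assoc (b*c*d), h]; ring)
      (by
        intro i hi h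
        apply g0 (n+1+1+i) (by lia)
        rw [← h]; ring)
      g5
    have z0 : qShiftedFactorial (1/q^(n+1)*q) q (n+1) = 0 := by
      rw [qsf_succ]
      have : 1/q^(n+1)*q*q^n = 1 := by
        field_simp
        ring
      rw [this]; ring
    rw [z0, Finset.sum_sub_distrib, ← Finset.mul_sum, ← Finset.mul_sum,
      Finset.sum_range_succ (fun k => qdT q a b c d (a^2*q^(n+1)/(b*c*d)) _ _ _ k)] at tele
    have z1 : qdT q a b c d (a^2*q^(n+1)/(b*c*d)) (1/q^(n+1)*q)
        (b*c*d/(a*q^(n+1))*q) (a*q^(n+1)) (n+1) = 0 := by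
      unfold qdT
      rw [z0]; simp
    have r1 : 1/q^(n+1)*q = q^(-(n:ℤ)) := by
      rw [zpow_neg, zpow_natCast]; field_simp
      ring
    have r2 : b*c*d/(a*q^(n+1))*q = b*c*d*q^(-(n:ℤ))/a := by
      rw [zpow_neg, zpow_natCast]; field_simp
      ring
    have r3 : 1/q^(n+1) = q^(-((n+1 : ℕ):ℤ)) := by
      rw [zpow_neg, zpow_natCast]; field_simp
    have r4 : b*c*d/(a*q^(n+1)) = b*c*d*q^(-((n+1 : ℕ):ℤ))/a := by
      rw [zpow_neg, zpow_natCast]; field_simp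
    have r5 : a^2*q^(n+1)/(b*c*d)*q = a^2*q^(n+1+1)/(b*c*d) := by ring
    have r6 : a*q^(n+1)*q = a*q^(n+1+1) := by ring
    rw [z1, r1, r2, ih', r3, r4, r5, r6] at tele
    have q7 : ∀ z, qShiftedFactorial (a*q/z) q (n+1) =
        qShiftedFactorial (a*q/z) q n * (1 - a*q^(n+1)/z) := by
      intro z; rw [qsf_succ]; ring
    have q8 : qShiftedFactorial (a*q) q (n+1) =
        qShiftedFactorial (a*q) q n * (1 - a*q^(n+1)) := by
      rw [qsf_succ]; ring
    have ob := one b hb g1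
    have oc := one c hc g2
    have od := one d hd g3
    have obcd := one (b*c*d) hbcd g4
    have nb : ∀ z : ℂ, z ≠ 0 → (∀ j ≤ n+1, a*q^j ≠ z) → qShiftedFactorial (a*q/z) q n ≠ 0 :=
      fun z hz h => qsf_ne _ _ _ (fun i hi => gen z hz h i (by lia))
    have nb1 := nb b hb g1
    have nb2 := nb c hc g2
    have nb3 := nb d hd g3
    have nb4 := nb (b*c*d) hbcd g4
    rw [q8, q7, q7, q7, q7, q7, q7, q7]
    apply mul_left_cancel₀ (mul_ne_zero (mul_ne_zero (mul_ne_zero ob oc) od) obcd)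
    have t2 := sub_eq_zero.1 (tele.trans (by simp))
    rw [t2]
    generalize 1 - a*q^(n+1)/b = x1 at *
    generalize 1 - a*q^(n+1)/c = x2 at *
    generalize 1 - a*q^(n+1)/d = x3 at *
    generalize 1 - a*q^(n+1)/(b*c*d) = x4 at *
    generalize 1 - a*q^(n+1)/(b*c) = x5 at *
    generalize 1 - a*q^(n+1)/(b*d) = x6 at *
    generalize 1 - a*q^(n+1)/(c*d) = x7 at *
    generalize 1 - a*q^(n+1) = x8 at *
    generalize qShiftedFactorial (a*q/b) q n = y1 at *
    generalize qShiftedFactorial (a*q/c) q n = y2 at *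
    generalize qShiftedFactorial (a*q/d) q n = y3 at *
    generalize qShiftedFactorial (a*q/(b*c*d)) q n = y4 at *
    generalize qShiftedFactorial (a*q/(b*c)) q n = y5 at *
    generalize qShiftedFactorial (a*q/(b*d)) q n = y6 at *
    generalize qShiftedFactorial (a*q/(c*d)) q n = y7 at *
    generalize qShiftedFactorial (a*q) q n = y8 at *
    clear * - ob oc od obcd nb1 nb2 nb3 nb4
    field_simp
    ring

theorem qsf_cont (f : ℂ → ℂ) (q a : ℂ) (k : ℕ) (hf : ContinuousAt f a) :
    ContinuousAt (fun t => qShiftedFactorial (f t) q k) a := by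
  unfold qShiftedFactorial
  fun_prop

open Filter Topology in
theorem qd_ev (q a z : ℂ) (hq : q ≠ 0) (N : ℕ) :
    ∀ᶠ t in 𝓝[≠] a, ∀ j ≤ N, t * q^j ≠ z := by
  have h : ∀ j ∈ Finset.range (N+1), ∀ᶠ t in 𝓝[≠] a, t * q^j ≠ z := by
    intro j _
    have hj : q^j ≠ 0 := pow_ne_zero _ hq
    by_cases hz : z / q^j = a
    · filter_upwards [self_mem_nhdsWithin] with t ht h
      apply ht
      rw [Set.mem_singleton_iff, ← hz, ← h]
      field_simp
    · have : ∀ᶠ t in 𝓝 a, t ≠ z / q^j := eventually_ne_nhds (Ne.symm hz)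
      filter_upwards [nhdsWithin_le_nhds this] with t ht h
      apply ht
      rw [← h]
      field_simp
  filter_upwards [(Filter.eventually_all_finset _).2 h] with t ht j hj
  exact ht j (Finset.mem_range.2 (by lia))

/-- Jackson's q-analog of Dougall's sum: the summation of a terminating, balanced,
very-well-poised ₈φ₇ basic hypergeometric series. -/
theorem q_dougall (n : ℕ) (q a b c d : ℂ)
    (hq : q ≠ 0) (ha : a ≠ 0) (hb : b ≠ 0) (hc : c ≠ 0) (hd : d ≠ 0) (ha1 : a ≠ 1)
    (h1 : ∀ k ≤ n, qShiftedFactorial (a * q / b) q k ≠ 0)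
    (h2 : ∀ k ≤ n, qShiftedFactorial (a * q / c) q k ≠ 0)
    (h3 : ∀ k ≤ n, qShiftedFactorial (a * q / d) q k ≠ 0)
    (h4 : ∀ k ≤ n, qShiftedFactorial (b * c * d * q ^ (-(n : ℤ)) / a) q k ≠ 0)
    (h5 : ∀ k ≤ n, qShiftedFactorial (a * q ^ (n + 1)) q k ≠ 0)
    (h6 : ∀ k ≤ n, qShiftedFactorial q q k ≠ 0)
    (h7 : qShiftedFactorial (a * q / (b * c * d)) q n ≠ 0) :
    ∑ k ∈ Finset.range (n + 1),
      ((1 - a * q ^ (2 * k)) / (1 - a)) *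
        ((qShiftedFactorial a q k * qShiftedFactorial b q k * qShiftedFactorial c q k *
            qShiftedFactorial d q k *
            qShiftedFactorial (a ^ 2 * q ^ (n + 1) / (b * c * d)) q k *
            qShiftedFactorial (q ^ (-(n : ℤ))) q k) /
          (qShiftedFactorial (a * q / b) q k * qShiftedFactorial (a * q / c) q k *
            qShiftedFactorial (a * q / d) q k *
            qShiftedFactorial (b * c * d * q ^ (-(n : ℤ)) / a) q k *
            qShiftedFactorial (a * q ^ (n + 1)) q k * qShiftedFactorial q q k)) * q ^ k
      = (qShiftedFactorial (a * q) q n * qShiftedFactorial (a * q / (b * c)) q n *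
            qShiftedFactorial (a * q / (b * d)) q n *
            qShiftedFactorial (a * q / (c * d)) q n) /
          (qShiftedFactorial (a * q / b) q n * qShiftedFactorial (a * q / c) q n *
            qShiftedFactorial (a * q / d) q n *
            qShiftedFactorial (a * q / (b * c * d)) q n) := by
  have hoa : 1 - a ≠ 0 := sub_ne_zero.2 ha1.symm
  have hbcd : b * c * d ≠ 0 := mul_ne_zero (mul_ne_zero hb hc) hd
  have h6' : ∀ j < n, q * q^j ≠ 1 := by
    intro j hj h
    have := h6 n le_rfl
    rw [qShiftedFactorial, Finset.prod_ne_zero_iff] at this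
    exact this j (Finset.mem_range.2 hj) (sub_eq_zero.2 h.symm)
  let L : ℂ → ℂ := fun t => ∑ k ∈ Finset.range (n+1), qdT q t b c d (t^2*q^(n+1)/(b*c*d))
    (q^(-(n:ℤ))) (b*c*d*q^(-(n:ℤ))/t) (t*q^(n+1)) k
  let R : ℂ → ℂ := fun a => (qShiftedFactorial (a * q) q n * qShiftedFactorial (a * q / (b * c)) q n *
            qShiftedFactorial (a * q / (b * d)) q n *
            qShiftedFactorial (a * q / (c * d)) q n) /
          (qShiftedFactorial (a * q / b) q n * qShiftedFactorial (a * q / c) q n *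
            qShiftedFactorial (a * q / d) q n *
            qShiftedFactorial (a * q / (b * c * d)) q n)
  have hdiv : ∀ z : ℂ, ContinuousAt (fun t : ℂ => t * q / z) a := by
    intro z; fun_prop
  have hL : ContinuousAt L a := by
    apply tendsto_finsetSum
    intro k hk
    have hk : k ≤ n := by have := Finset.mem_range.1 hk; lia
    unfold qdT
    have c1 := qsf_cont _ q a k (hdiv b)
    have c2 := qsf_cont _ q a k (hdiv c)
    have c3 := qsf_cont _ q a k (hdiv d)
    have c4 := qsf_cont (fun t => b*c*d*q^(-(n:ℤ))/t) q a k
      (continuousAt_const.div continuousAt_id ha)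
    have c5 := qsf_cont (fun t => t*q^(n+1)) q a k (by fun_prop)
    have c6 := qsf_cont (fun t => t) q a k (by fun_prop)
    have c7 := qsf_cont (fun t => t^2*q^(n+1)/(b*c*d)) q a k (by fun_prop)
    refine ContinuousAt.mul (ContinuousAt.mul (ContinuousAt.div (by fun_prop) (by fun_prop) hoa)
      (ContinuousAt.div ?_ ?_ ?_)) continuousAt_const
    · exact ((((c6.mul continuousAt_const).mul continuousAt_const).mul continuousAt_const).mul
        c7).mul continuousAt_const
    · exact ((((c1.mul c2).mul c3).mul c4).mul c5).mul continuousAt_const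
    · exact mul_ne_zero (mul_ne_zero (mul_ne_zero (mul_ne_zero (mul_ne_zero (h1 k hk) (h2 k hk))
        (h3 k hk)) (h4 k hk)) (h5 k hk)) (h6 k hk)
  have hR : ContinuousAt R a := by
    have c0 := qsf_cont (fun t => t*q) q a n (by fun_prop)
    have cc := fun z => qsf_cont _ q a n (hdiv z)
    refine ContinuousAt.div (((c0.mul (cc _)).mul (cc _)).mul (cc _))
      ((((cc _).mul (cc _)).mul (cc _)).mul (cc _)) ?_
    exact mul_ne_zero (mul_ne_zero (mul_ne_zero (h1 n le_rfl) (h2 n le_rfl)) (h3 n le_rfl)) h7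
  have hev : ∀ᶠ t in nhdsWithin a {a}ᶜ, L t = R t := by
    filter_upwards [qd_ev q a 1 hq (2*n), qd_ev q a b hq n, qd_ev q a c hq n, qd_ev q a d hq n,
      qd_ev q a (b*c*d) hq n, nhdsWithin_le_nhds (eventually_ne_nhds ha)] with t g0 g1 g2 g3 g4 ht
    exact qd_generic q t b c d hq ht hb hc hd n g0 g1 g2 g3 g4 h6'
  exact tendsto_nhds_unique_of_eventuallyEq (hL.tendsto.mono_left nhdsWithin_le_nhds)
    (hR.tendsto.mono_left nhdsWithin_le_nhds) hev
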